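/- Let (G,T) be a bipartite graft, F a minimum join of (G,T), and r ∈ V(G). Let K be a decapital distance component of (G,T) with respect to r, with F-beam e, F-root r_K and F-antiroot s_K. Let r' ∈ V(G)\V(K) be K-congruent to r. Then every F-shortest path between r' and r_K contains the edge e and intersects V(K) only in the end r_K. -/

import Mathlib

/-!
The argument is carried out with edge sets instead of paths. The boundary `bd S` of an edge set `S`
is its vector of degree parities, so that joins of `T` are the edge sets with boundary `T`. A set
`S` has an `F`-weight (`gain` with unit lengths), which is the change of size of `F` when `F` is
replaced by `F Δ S`. As `F` is minimum, sets with zero boundary have nonnegative weight, and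
`dist_F(a, b)` is the least weight of a set with boundary `{a, b}` (`distF_le_gain`). Thus
`|F| + dist_F(r, x)` is the least size of an edge set with boundary `T Δ {r, x}`.

The main tool is Sebő's theorem (`Potential.sebo`). Let `K` be a component of the set of vertices
at distance at most `i` from `r`, and `J` a minimum join of `T Δ {r, x}` with `x` reachable from
`r`. Then `J` has no edge in the cut of `K` if `x ∈ K` and one edge otherwise. Also, an edge set
joining two vertices of `K` at distance exactly `i` has nonnegative weight with respect to `J`. The
proof is by contraction of the components on which the distance is minimum. To stay on a fixed
vertex set, contraction is expressed by giving length `0` to all edges that meet such a component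
`B`, so edge lengths are `0` or `1` throughout. Bipartiteness makes the distance change by exactly
the length along every edge, so that all edges leaving `B` have length `1` and all edges inside have
length `0`. A minimum join rooted in `B` does not leave `B`, and comparison of another join with it
shows that the distances after contraction drop by exactly one outside `B` (`contract_lb`). The
level of `K` therefore comes down to the minimum, where the statement is that for `B`.

Let now `K` be as in the theorem, at level `i`, with beam `e`. Ends in `K` of cut edges have distance
exactly `i` from `r`. If `x ∈ K` is such an end then a shortest path from `r` to `x` meets the cut
of `K` exactly in `e`, as neither `F Δ P` nor `F \ {e}` meets it; its part inside `K` joins `x` to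
`r_K` and has weight at most `0`, since the rest joins `r` to `r_K` and has weight at least `i`
(`exists_root_set`).

By congruence, any edge set joining `r'` to `r_K` of weight `dist_F(r', r_K)` contains `e`, because
adding a missing `e` would give a set joining `r'` to `s_K` that is lighter by one (`beam_mem`). In
particular this holds for a shortest path `P`. If `P` first enters `K` at `x ≠ r_K`, then its part
after `x` has nonnegative weight by Sebő's theorem. Replacing that part by the set inside `K` above
gives an edge set joining `r'` to `r_K` that is still shortest but does not contain `e`, a
contradiction. So `P` first enters `K` at its end `r_K`.
-/

namespace TightCuts

open SimpleGraph

variable {V : Type*}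

/-- `(G, T)` is a graft: every connected component of `G` contains an even
number of vertices of `T`. -/
def IsGraft (G : SimpleGraph V) (T : Set V) : Prop :=
  ∀ c : G.ConnectedComponent, Even ((T ∩ {v | G.connectedComponentMk v = c}).ncard)

/-- `F` is a join of the graft `(G, T)`: a set of edges such that a vertex is
incident with an odd number of edges of `F` exactly when it lies in `T`. -/
def IsJoin (G : SimpleGraph V) (T : Set V) (F : Set (Sym2 V)) : Prop :=
  F ⊆ G.edgeSet ∧ ∀ v : V, (Odd ({e ∈ F | v ∈ e}).ncard ↔ v ∈ T)

/-- `ν(G, T)`: the minimum size of a join of `(G, T)`. -/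
noncomputable def nu (G : SimpleGraph V) (T : Set V) : ℕ :=
  sInf {n | ∃ F : Set (Sym2 V), IsJoin G T F ∧ F.ncard = n}

/-- `F` is a minimum join of `(G, T)`. -/
def IsMinJoin (G : SimpleGraph V) (T : Set V) (F : Set (Sym2 V)) : Prop :=
  IsJoin G T F ∧ F.ncard = nu G T

open Classical in
/-- The `F`-weight of an edge: `-1` if the edge lies in `F`, `+1` otherwise. -/
noncomputable def edgeWt (F : Set (Sym2 V)) (e : Sym2 V) : ℤ :=
  if e ∈ F then -1 else 1

/-- The `F`-weight of a walk: the sum of the `F`-weights of its edges. -/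
noncomputable def walkWt (F : Set (Sym2 V)) {G : SimpleGraph V} {x y : V}
    (p : G.Walk x y) : ℤ :=
  (p.edges.map (edgeWt F)).sum

/-- The `F`-distance between `x` and `y`: the minimum `F`-weight of a path
between `x` and `y`. -/
noncomputable def distF (G : SimpleGraph V) (F : Set (Sym2 V)) (x y : V) : ℤ :=
  sInf {n : ℤ | ∃ p : G.Walk x y, p.IsPath ∧ walkWt F p = n}

/-- `K` is (the vertex set of) a connected component of the subgraph of `G`
induced by `U`. -/
def IsComponentOf (G : SimpleGraph V) (U K : Set V) : Prop :=
  K.Nonempty ∧ K ⊆ U ∧ (G.induce K).Connected ∧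
    ∀ x ∈ K, ∀ y ∈ U, G.Adj x y → y ∈ K

/-- `K` is a distance component of the graft with respect to root `r` at level `i`
(with respect to a minimum join `F`): `i` is attained as an `F`-distance from `r`,
and `K` is a connected component of the subgraph induced by the vertices at
`F`-distance at most `i` from `r`. -/
def IsDistCompAt (G : SimpleGraph V) (F : Set (Sym2 V)) (r : V) (i : ℤ) (K : Set V) : Prop :=
  (∃ x, distF G F r x = i) ∧ IsComponentOf G {x | distF G F r x ≤ i} K

/-- `K` is a decapital distance component with respect to root `r`: a distance
component (at some level) not containing `r`. -/
def IsDecapDistComp (G : SimpleGraph V) (F : Set (Sym2 V)) (r : V) (K : Set V) : Prop :=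
  ∃ i : ℤ, IsDistCompAt G F r i K ∧ r ∉ K

/-- The edge cut `δ_G(K)`: edges of `G` with exactly one end in `K`. -/
def cutEdges (G : SimpleGraph V) (K : Set V) : Set (Sym2 V) :=
  {e | e ∈ G.edgeSet ∧ ∃ x y, e = s(x, y) ∧ x ∈ K ∧ y ∉ K}

/-- An edge is allowed in `(G, T)` if some minimum join contains it. -/
def Allowed (G : SimpleGraph V) (T : Set V) (e : Sym2 V) : Prop :=
  ∃ F, IsMinJoin G T F ∧ e ∈ F

/-- Two vertices are factor-connected if there is a walk between them all of
whose edges are allowed. -/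
def FactorConnected (G : SimpleGraph V) (T : Set V) (u v : V) : Prop :=
  ∃ p : G.Walk u v, ∀ e ∈ p.edges, Allowed G T e

/-- `C` is (the vertex set of) a factor-component of `(G, T)`: an equivalence
class of factor-connectivity. -/
def IsFactorComponent (G : SimpleGraph V) (T : Set V) (C : Set V) : Prop :=
  ∃ v, C = {u | FactorConnected G T u v}

/-- The Kotzig–Lovász relation: `u ∼ v` iff `u = v`, or `u` and `v` are
factor-connected (hence in the same factor-component) and
`ν(G, T) = ν(G, T Δ {u, v})`. -/
def klRel (G : SimpleGraph V) (T : Set V) (u v : V) : Prop :=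
  u = v ∨ (FactorConnected G T u v ∧ nu G T = nu G (symmDiff T {u, v}))

/-- `S` is a Kotzig–Lovász class of `(G, T)`. -/
def IsKLClass (G : SimpleGraph V) (T : Set V) (S : Set V) : Prop :=
  ∃ v, S = {u | klRel G T u v}

/-- `A(K)` for a distance component `K` at level `i`: the vertices of `K` at
`F`-distance exactly `i` from `r`. -/
def AK (G : SimpleGraph V) (F : Set (Sym2 V)) (r : V) (i : ℤ) (K : Set V) : Set V :=
  K ∩ {x | distF G F r x = i}

/-- `D(K) = V(K) \ A(K)`. -/
def DK (G : SimpleGraph V) (F : Set (Sym2 V)) (r : V) (i : ℤ) (K : Set V) : Set V :=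
  K \ AK G F r i K

/-- `S` is the root class of `K`: a Kotzig–Lovász class containing all ends in
`K` of allowed edges of the cut `δ_G(K)`. -/
def IsRootClass (G : SimpleGraph V) (T : Set V) (K S : Set V) : Prop :=
  IsKLClass G T S ∧ ∀ e ∈ cutEdges G K, Allowed G T e → ∀ u ∈ e, u ∈ K → u ∈ S

/-- `S` is the antiroot class of `K`: a Kotzig–Lovász class containing all ends
outside `K` of allowed edges of the cut `δ_G(K)`. -/
def IsAntirootClass (G : SimpleGraph V) (T : Set V) (K S : Set V) : Prop :=
  IsKLClass G T S ∧ ∀ e ∈ cutEdges G K, Allowed G T e → ∀ u ∈ e, u ∉ K → u ∈ S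

/-- The family `𝒜(K)`: the root fragment `K ∩ S_K` together with all
Kotzig–Lovász classes other than `S_K` that contain a vertex of `A(K)`. -/
def famA (G : SimpleGraph V) (T : Set V) (F : Set (Sym2 V)) (r : V) (i : ℤ)
    (K S_K : Set V) : Set (Set V) :=
  insert (K ∩ S_K) {S | IsKLClass G T S ∧ S ≠ S_K ∧ (S ∩ AK G F r i K).Nonempty}

/-- `L` is adjacent to a vertex of `S` by an allowed edge. -/
def AdjAllowed (G : SimpleGraph V) (T : Set V) (L S : Set V) : Prop :=
  ∃ x ∈ L, ∃ s ∈ S, G.Adj x s ∧ Allowed G T s(x, s)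

/-- `𝒩_K(S)`: the family of connected components of `G[D(K)]` adjacent to a
vertex of `S` by an allowed edge. -/
def NKfam (G : SimpleGraph V) (T : Set V) (F : Set (Sym2 V)) (r : V) (i : ℤ)
    (K S : Set V) : Set (Set V) :=
  {L | IsComponentOf G (DK G F r i K) L ∧ AdjAllowed G T L S}

/-- `U_K(S)`: the union of the vertex sets of the members of `𝒩_K(S)`. -/
def UK (G : SimpleGraph V) (T : Set V) (F : Set (Sym2 V)) (r : V) (i : ℤ)
    (K S : Set V) : Set V :=
  ⋃₀ NKfam G T F r i K S

/-- `X` is an `F`-negative set for `S`: `X` is disjoint from `S` and every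
`x ∈ X` admits a path of negative `F`-weight from `x` to a vertex of `S` whose
vertices, except the end in `S`, all lie in `X`. -/
def IsNegSet (G : SimpleGraph V) (F : Set (Sym2 V)) (S X : Set V) : Prop :=
  X ⊆ Sᶜ ∧ ∀ x ∈ X, ∃ y ∈ S, ∃ p : G.Walk x y, p.IsPath ∧ walkWt F p < 0 ∧
    ∀ v ∈ p.support, v ≠ y → v ∈ X

/-- The maximum `F`-negative set for `S`: the union of all `F`-negative sets
for `S`. -/
def maxNegSet (G : SimpleGraph V) (F : Set (Sym2 V)) (S : Set V) : Set V :=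
  ⋃₀ {X | IsNegSet G F S X}

/-- The maximum `F`-negative set for `S` avoiding `Y`. -/
def maxNegSetAvoiding (G : SimpleGraph V) (F : Set (Sym2 V)) (S Y : Set V) : Set V :=
  ⋃₀ {X | IsNegSet G F S X ∧ Disjoint X Y}

/-! ### Boundaries of edge sets and potentials -/

section Potential

set_option linter.unusedSectionVars false

variable [Fintype V] [DecidableEq V]

/-- The boundary of an edge set over `ZMod 2`: the parity of the degree at each vertex. -/
def bd (S : Finset (Sym2 V)) (v : V) : ZMod 2 :=
  ∑ e ∈ S, if v ∈ e then 1 else 0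

/-- The indicator of a vertex, as a vector over `ZMod 2`. -/
def pt (x : V) : V → ZMod 2 := Pi.single x 1

/-- `S` is a set of edges of `G` with boundary `b`. -/
def IsBd (G : SimpleGraph V) (b : V → ZMod 2) (S : Finset (Sym2 V)) : Prop :=
  (∀ e ∈ S, e ∈ G.edgeSet) ∧ bd S = b

/-- The edge `e` has an end in `K` and an end outside `K`. -/
def Crosses (K : Finset V) (e : Sym2 V) : Prop :=
  (∃ v ∈ e, v ∈ K) ∧ ∃ v ∈ e, v ∉ K

open Classical in
/-- The edges of `S` with exactly one end in `K`. -/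
noncomputable def cross (S : Finset (Sym2 V)) (K : Finset V) : Finset (Sym2 V) :=
  S.filter (Crosses K)

lemma mem_cross {S : Finset (Sym2 V)} {K : Finset V} {e : Sym2 V} :
    e ∈ cross S K ↔ e ∈ S ∧ Crosses K e := by
  simp [cross]

lemma add_self_fun (a : V → ZMod 2) : a + a = 0 :=
  funext fun _ => CharTwo.add_self_eq_zero _

lemma sum_symmDiff_aux {M : Type*} [AddCommGroup M] (h : Sym2 V → M) (A B : Finset (Sym2 V)) :
    ∑ e ∈ symmDiff A B, h e = ∑ e ∈ A, h e + ∑ e ∈ B, if e ∈ A then -h e else h e := by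
  have h1 : symmDiff A B = (A \ B) ∪ (B \ A) := rfl
  rw [h1, Finset.sum_union (by
    rw [Finset.disjoint_left]; intro x hx hy; simp at hx hy; tauto)]
  rw [← Finset.sum_inter_add_sum_sdiff A B h, ← Finset.sum_inter_add_sum_sdiff B A]
  have h2 : ∑ e ∈ B \ A, (if e ∈ A then -h e else h e) = ∑ e ∈ B \ A, h e :=
    Finset.sum_congr rfl fun e he => by simp at he; simp [he.2]
  have h3 : ∑ e ∈ B ∩ A, (if e ∈ A then -h e else h e) = - ∑ e ∈ A ∩ B, h e := by
    rw [Finset.inter_comm, ← Finset.sum_neg_distrib]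
    exact Finset.sum_congr rfl fun e he => by simp at he; simp [he.1]
  rw [h2, h3]; abel

lemma bd_symmDiff (A B : Finset (Sym2 V)) : bd (symmDiff A B) = bd A + bd B := by
  funext v
  simp only [bd, Pi.add_apply]
  rw [sum_symmDiff_aux]
  congr 1
  refine Finset.sum_congr rfl fun e _ => ?_
  split_ifs <;> rfl

lemma bd_union {A B : Finset (Sym2 V)} (h : Disjoint A B) : bd (A ∪ B) = bd A + bd B := by
  funext v
  simp only [bd, Pi.add_apply]
  exact Finset.sum_union h

lemma bd_sdiff {S Q : Finset (Sym2 V)} (h : Q ⊆ S) : bd (S \ Q) = bd S + bd Q := by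
  have h1 : bd S = bd (S \ Q) + bd Q := by
    rw [← bd_union Finset.sdiff_disjoint, Finset.sdiff_union_of_subset h]
  rw [h1, add_assoc, add_self_fun, add_zero]

lemma bd_single {u v : V} (h : u ≠ v) : bd {s(u, v)} = pt u + pt v := by
  funext w
  simp only [bd, Finset.sum_singleton]
  by_cases h1 : w = u
  · subst h1; simp [pt, h]
  · by_cases h2 : w = v
    · subst h2; simp [pt, h.symm]
    · simp [pt, h1, h2]

lemma IsBd.symmDiff {G : SimpleGraph V} {a b : V → ZMod 2} {A B : Finset (Sym2 V)}
    (hA : IsBd G a A) (hB : IsBd G b B) : IsBd G (a + b) (symmDiff A B) := by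
  refine ⟨fun e he => ?_, by rw [bd_symmDiff, hA.2, hB.2]⟩
  rcases Finset.mem_symmDiff.1 he with h | h
  · exact hA.1 e h.1
  · exact hB.1 e h.1

lemma IsBd.edge {G : SimpleGraph V} {u v : V} (h : G.Adj u v) :
    IsBd G (pt u + pt v) {s(u, v)} :=
  ⟨by simpa using h, bd_single h.ne⟩

lemma IsBd.cast {G : SimpleGraph V} {a b : V → ZMod 2} {A : Finset (Sym2 V)}
    (hA : IsBd G a A) (h : a = b) : IsBd G b A := h ▸ hA

/-- Double counting of incidences between a vertex weighting and an edge set. -/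
lemma sum_mul_bd (f : V → ZMod 2) (S : Finset (Sym2 V)) :
    ∑ v, f v * bd S v = ∑ e ∈ S, ∑ v, if v ∈ e then f v else 0 := by
  simp only [bd, Finset.mul_sum]
  rw [Finset.sum_comm]
  refine Finset.sum_congr rfl fun e _ => Finset.sum_congr rfl fun v _ => ?_
  split_ifs <;> simp

lemma sum_ends (f : V → ZMod 2) {u w : V} (h : u ≠ w) :
    (∑ v, if v ∈ s(u, w) then f v else 0) = f u + f w := by
  rw [← Finset.sum_filter]
  have : (Finset.univ.filter fun v => v ∈ s(u, w)) = {u, w} := by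
    ext v; simp
  rw [this, Finset.sum_pair h]

/-- The parity of the number of edges of `S` leaving `K` is the number of odd vertices in `K`. -/
lemma card_cross (G : SimpleGraph V) (S : Finset (Sym2 V)) (hS : ∀ e ∈ S, e ∈ G.edgeSet)
    (K : Finset V) : ((cross S K).card : ZMod 2) = ∑ v ∈ K, bd S v := by
  classical
  have h1 : ∑ v ∈ K, bd S v = ∑ v, (if v ∈ K then 1 else 0) * bd S v := by
    simp [Finset.sum_ite_mem]
  rw [h1, sum_mul_bd, cross, Finset.card_filter, Nat.cast_sum]
  refine Finset.sum_congr rfl fun e he => ?_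
  have hG := hS e he
  induction e with | _ u w =>
  rw [sum_ends _ (G.ne_of_adj hG)]
  by_cases hu : u ∈ K <;> by_cases hw : w ∈ K <;> simp [Crosses, hu, hw]
  decide

/-- An odd vertex `u` of an edge set `S` is joined to another odd vertex by a walk in `S`; this is
the step that splits an edge set into paths and cycles. -/
lemma exists_walk_of_bd (G : SimpleGraph V) (S : Finset (Sym2 V)) (hS : ∀ e ∈ S, e ∈ G.edgeSet)
    (u : V) (hu : bd S u = 1) :
    ∃ v, v ≠ u ∧ bd S v = 1 ∧ (SimpleGraph.fromEdgeSet (S : Set (Sym2 V))).Reachable u v := by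
  classical
  by_contra! hcon
  set H := SimpleGraph.fromEdgeSet (S : Set (Sym2 V)) with hH
  let K : Finset V := Finset.univ.filter fun v => H.Reachable u v
  have h0 : cross S K = ∅ := by
    rw [Finset.eq_empty_iff_forall_notMem]
    intro e he
    rw [mem_cross] at he
    obtain ⟨heS, ⟨a, ha, haK⟩, b, hb, hbK⟩ := he
    have hab : a ≠ b := fun h => hbK (h ▸ haK)
    have he : e = s(a, b) := (Sym2.mem_and_mem_iff hab).1 ⟨ha, hb⟩
    have : H.Adj a b := by
      rw [hH, SimpleGraph.fromEdgeSet_adj]; exact ⟨he ▸ heS, hab⟩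
    simp only [K, Finset.mem_filter, Finset.mem_univ, true_and] at haK hbK
    exact hbK (haK.trans this.reachable)
  have h1 := card_cross G S hS K
  rw [h0, Finset.sum_eq_single u] at h1
  · rw [hu] at h1; simp at h1
  · intro v hv hvu
    simp only [K, Finset.mem_filter, Finset.mem_univ, true_and] at hv
    have := hcon v hvu
    have h2 : ∀ z : ZMod 2, z ≠ 1 → z = 0 := by decide
    exact h2 _ fun h => this h hv
  · intro h; exact absurd (by simp [K]) h

lemma exists_sub_of_reachable (S : Finset (Sym2 V)) {u v : V}
    (h : (SimpleGraph.fromEdgeSet (S : Set (Sym2 V))).Reachable u v) :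
    ∃ Q ⊆ S, bd Q = pt u + pt v := by
  obtain ⟨p⟩ := h
  induction p with
  | nil => exact ⟨∅, by simp, by rw [add_self_fun]; rfl⟩
  | @cons a b c hab p ih =>
    obtain ⟨Q, hQ, hb⟩ := ih
    rw [SimpleGraph.fromEdgeSet_adj] at hab
    refine ⟨symmDiff {s(a, b)} Q, fun e he => ?_, ?_⟩
    · rcases Finset.mem_symmDiff.1 he with h | h
      · have := Finset.mem_singleton.1 h.1; subst this; exact hab.1
      · exact hQ h.1
    · rw [bd_symmDiff, hb, bd_single hab.2]
      linear_combination add_self_fun (pt b)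

/-- Integer lengths `c` on the edges, together with the potential `μ x`, the least length of an
edge set with boundary `t + pt x`, on a union `R` of components of `G`. By `par` the ends of an
edge of length `1` have different labels `f` and those of an edge of length `0` have equal labels,
which says that contracting the edges of length `0` leaves a bipartite graph. -/
structure Potential (G : SimpleGraph V) (R : Finset V) (t f : V → ZMod 2) (c : Sym2 V → ℤ)
    (μ : V → ℤ) : Prop where
  c01 : ∀ e, c e = 0 ∨ c e = 1
  par : ∀ u v, G.Adj u v → (c s(u, v) : ZMod 2) = f u + f v
  clo : ∀ u ∈ R, ∀ v, G.Adj u v → v ∈ R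
  att : ∀ x ∈ R, ∃ J, IsBd G (t + pt x) J ∧ ∑ e ∈ J, c e = μ x
  lb : ∀ x ∈ R, ∀ J, IsBd G (t + pt x) J → μ x ≤ ∑ e ∈ J, c e

/-- `K` is the vertex set of a connected component of the subgraph induced by `U`. Connectivity is
expressed by chains of adjacent vertices of `K` that start at a fixed vertex. -/
def IsComp (G : SimpleGraph V) (U K : Finset V) : Prop :=
  (∃ x ∈ K, ∀ y ∈ K, Relation.ReflTransGen (fun a b => G.Adj a b ∧ b ∈ K) x y) ∧ K ⊆ U ∧
    ∀ x ∈ K, ∀ y ∈ U, G.Adj x y → y ∈ K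

namespace Potential

variable {G : SimpleGraph V} {R : Finset V} {t f : V → ZMod 2} {c : Sym2 V → ℤ} {μ : V → ℤ}

lemma sum_symmDiff_le (hc : ∀ e, c e = 0 ∨ c e = 1) (A B : Finset (Sym2 V)) :
    ∑ e ∈ symmDiff A B, c e ≤ ∑ e ∈ A, c e + ∑ e ∈ B, c e := by
  rw [sum_symmDiff_aux]
  gcongr with e
  split_ifs
  · rcases hc e with h | h <;> simp [h]
  · exact le_rfl

/-- The potential changes by exactly the length along an edge, since the potentials of its
ends differ by at most the length, and by `par` with the same parity. -/
lemma abs_sub (h : Potential G R t f c μ) {u v : V} (hu : u ∈ R) (huv : G.Adj u v) :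
    |μ u - μ v| = c s(u, v) := by
  have hv := h.clo u hu v huv
  have key : ∀ a b : V, a ∈ R → b ∈ R → G.Adj a b → μ b ≤ μ a + c s(a, b) := by
    intro a b ha hb hab
    obtain ⟨J, hJ, hJc⟩ := h.att a ha
    have h1 := h.lb b hb _ ((hJ.symmDiff (IsBd.edge hab)).cast
      (b := t + pt b) (by linear_combination add_self_fun (pt a)))
    have h2 := sum_symmDiff_le h.c01 J {s(a, b)}
    simp only [Finset.sum_singleton] at h2
    omega
  have h1 := key u v hu hv huv
  have h2 := key v u hv hu huv.symm
  rw [Sym2.eq_swap] at h2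
  have par : ∀ x ∈ R, (μ x : ZMod 2) = ∑ v, f v * t v + f x := by
    intro x hx
    obtain ⟨J, hJ, hJc⟩ := h.att x hx
    rw [← hJc, Int.cast_sum]
    have : ∀ e ∈ J, (c e : ZMod 2) = ∑ v, if v ∈ e then f v else 0 := by
      intro e he
      have hG := hJ.1 e he
      induction e with | _ a b =>
      rw [sum_ends _ (G.ne_of_adj hG)]
      exact h.par a b hG
    rw [Finset.sum_congr rfl this, ← sum_mul_bd, hJ.2]
    simp [mul_add, Finset.sum_add_distrib, pt, Pi.single_apply]
  have h3 : ((μ u - μ v - c s(u, v) : ℤ) : ZMod 2) = 0 := by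
    push_cast
    rw [par u hu, par v hv, h.par u v huv]
    have : ∀ a b c : ZMod 2, a + b - (a + c) - (b + c) = 0 := by decide
    exact this _ _ _
  rw [ZMod.intCast_zmod_eq_zero_iff_dvd] at h3
  rcases h.c01 s(u, v) with h4 | h4 <;> rw [h4] at h1 h2 h3 ⊢
  · rw [abs_eq_zero]; omega
  · rw [abs_eq one_pos.le]; push_cast at h3; omega

/-! ### Contraction of a component of minimum potential

A bottom component `B` is a component of the set of vertices at the minimum `m` of the potential. -/

/-- The edge lengths that represent the contraction of `B`: every edge with an end in `B` gets
length `0`. -/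
noncomputable def contract (c : Sym2 V → ℤ) (B : Finset V) (e : Sym2 V) : ℤ :=
  open Classical in if ∃ v ∈ e, v ∈ B then 0 else c e

section Bottom

variable {m : ℤ} {B : Finset V}

lemma mem_bottom (hm : ∀ x ∈ R, m ≤ μ x) (hB : IsComp G (R.filter fun x => μ x ≤ m) B)
    {x : V} (hx : x ∈ B) : x ∈ R ∧ μ x = m := by
  have h1 := Finset.mem_filter.1 (hB.2.1 hx)
  exact ⟨h1.1, le_antisymm h1.2 (hm x h1.1)⟩

lemma nbr_bottom (h : Potential G R t f c μ) (hm : ∀ x ∈ R, m ≤ μ x)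
    (hB : IsComp G (R.filter fun x => μ x ≤ m) B) {x u : V} (hx : x ∈ B) (hu : u ∉ B)
    (hxu : G.Adj x u) : u ∈ R ∧ μ u = m + 1 ∧ c s(x, u) = 1 := by
  obtain ⟨hxR, hxm⟩ := mem_bottom hm hB hx
  have huR := h.clo x hxR u hxu
  have h1 : ¬ μ u ≤ m := fun hle => hu (hB.2.2 x hx u (Finset.mem_filter.2 ⟨huR, hle⟩) hxu)
  have h2 := h.abs_sub hxR hxu
  have h3 : |μ x - μ u| = μ u - m := by rw [hxm, abs_of_nonpos] <;> omega
  rcases h.c01 s(x, u) with h4 | h4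
  · omega
  · exact ⟨huR, by omega, h4⟩

/-- Two vertices of a bottom component are joined by edges of length `0`. -/
lemma zero_bottom (h : Potential G R t f c μ) (hm : ∀ x ∈ R, m ≤ μ x)
    (hB : IsComp G (R.filter fun x => μ x ≤ m) B) {a b : V} (ha : a ∈ B) (hb : b ∈ B) :
    ∃ Z, IsBd G (pt a + pt b) Z ∧ ∑ e ∈ Z, c e ≤ 0 := by
  obtain ⟨x, hx, hconn⟩ := hB.1
  have key : ∀ y, Relation.ReflTransGen (fun a b => G.Adj a b ∧ b ∈ B) x y →
      y ∈ B ∧ ∃ Z, IsBd G (pt x + pt y) Z ∧ ∑ e ∈ Z, c e ≤ 0 := by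
    intro y hy
    induction hy with
    | refl => exact ⟨hx, ∅, ⟨by simp, by rw [add_self_fun]; rfl⟩, by simp⟩
    | @tail y z _ hyz ih =>
      obtain ⟨hy, Z, hZ, hZc⟩ := ih
      refine ⟨hyz.2, symmDiff Z {s(y, z)}, (hZ.symmDiff (IsBd.edge hyz.1)).cast
        (by linear_combination add_self_fun (pt y)), ?_⟩
      have h1 := sum_symmDiff_le h.c01 Z {s(y, z)}
      have h2 := h.abs_sub (mem_bottom hm hB hy).1 hyz.1
      rw [(mem_bottom hm hB hy).2, (mem_bottom hm hB hyz.2).2] at h2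
      simp at h1 h2
      omega
  obtain ⟨-, Z, hZ, hZc⟩ := key a (hconn a ha)
  obtain ⟨-, Z', hZ', hZc'⟩ := key b (hconn b hb)
  refine ⟨symmDiff Z Z', (hZ.symmDiff hZ').cast (by linear_combination add_self_fun (pt x)), ?_⟩
  have h1 := sum_symmDiff_le h.c01 Z Z'
  omega

lemma contract_add_card (h : Potential G R t f c μ) (hm : ∀ x ∈ R, m ≤ μ x)
    (hB : IsComp G (R.filter fun x => μ x ≤ m) B) {J : Finset (Sym2 V)}
    (hJ : ∀ e ∈ J, e ∈ G.edgeSet) :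
    ∑ e ∈ J, contract c B e + (cross J B).card = ∑ e ∈ J, c e := by
  classical
  rw [cross, Finset.card_filter, Nat.cast_sum, ← Finset.sum_add_distrib]
  refine Finset.sum_congr rfl fun e he => ?_
  have hG := hJ e he
  induction e with | _ u w =>
  rw [SimpleGraph.mem_edgeSet] at hG
  by_cases hu : u ∈ B <;> by_cases hw : w ∈ B
  · have := h.abs_sub (mem_bottom hm hB hu).1 hG
    rw [(mem_bottom hm hB hu).2, (mem_bottom hm hB hw).2] at this
    simp [contract, Crosses, hu, hw]
    simpa using this
  · simp [contract, Crosses, hu, hw, (nbr_bottom h hm hB hu hw hG).2.2]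
  · have := (nbr_bottom h hm hB hw hu hG.symm).2.2
    rw [Sym2.eq_swap] at this
    simp [contract, Crosses, hu, hw, this]
  · simp [contract, Crosses, hu, hw]

/-- A shortest edge set rooted in a bottom component does not leave it. -/
lemma cross_bottom_eq_empty (h : Potential G R t f c μ) (hm : ∀ x ∈ R, m ≤ μ x)
    (hB : IsComp G (R.filter fun x => μ x ≤ m) B) {x : V} (hx : x ∈ B) {J : Finset (Sym2 V)}
    (hJ : IsBd G (t + pt x) J) (hJc : ∑ e ∈ J, c e = m) : cross J B = ∅ := by
  rw [Finset.eq_empty_iff_forall_notMem]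
  intro e he
  rw [mem_cross] at he
  obtain ⟨heJ, ⟨b, hb, hbB⟩, u, hu, huB⟩ := he
  have hbu : b ≠ u := fun h => huB (h ▸ hbB)
  obtain rfl : e = s(b, u) := (Sym2.mem_and_mem_iff hbu).1 ⟨hb, hu⟩
  have hadj : G.Adj b u := hJ.1 _ heJ
  obtain ⟨huR, hum, hc1⟩ := nbr_bottom h hm hB hbB huB hadj
  obtain ⟨Z, hZ, hZc⟩ := zero_bottom h hm hB hx hbB
  -- Dropping the edge `bu` from `J` and re-rooting at `u` would give length `m - 1`.
  have h1 := h.lb u huR _ (((hJ.symmDiff (IsBd.edge hadj)).symmDiff hZ).cast (b := t + pt u)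
    (by linear_combination add_self_fun (pt b) + add_self_fun (pt x)))
  have h2 := sum_symmDiff_le h.c01 (symmDiff J {s(b, u)}) Z
  have h3 := sum_symmDiff_aux c J {s(b, u)}
  simp [heJ, hc1] at h3
  omega

/-- A bottom component contains an odd number of vertices of `t`. -/
lemma sum_bottom (h : Potential G R t f c μ) (hm : ∀ x ∈ R, m ≤ μ x)
    (hB : IsComp G (R.filter fun x => μ x ≤ m) B) : ∑ v ∈ B, t v = 1 := by
  obtain ⟨x, hx, -⟩ := hB.1
  obtain ⟨hxR, hxm⟩ := mem_bottom hm hB hx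
  obtain ⟨J, hJ, hJc⟩ := h.att x hxR
  have h1 := card_cross G J hJ.1 B
  rw [cross_bottom_eq_empty h hm hB hx hJ (hJc.trans hxm), hJ.2] at h1
  simp [Finset.sum_add_distrib, pt, Pi.single_apply, hx] at h1
  have : ∀ z : ZMod 2, 0 = z + 1 → z = 1 := by decide
  exact this _ h1

lemma card_cross_bottom (h : Potential G R t f c μ) (hm : ∀ x ∈ R, m ≤ μ x)
    (hB : IsComp G (R.filter fun x => μ x ≤ m) B) {x : V} {J : Finset (Sym2 V)}
    (hJ : IsBd G (t + pt x) J) :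
    ((cross J B).card : ZMod 2) = if x ∈ B then 0 else 1 := by
  rw [card_cross G J hJ.1 B, hJ.2]
  simp only [Pi.add_apply, Finset.sum_add_distrib, sum_bottom h hm hB, pt, Pi.single_apply,
    Finset.sum_ite_eq']
  split_ifs <;> decide

/-- The gain along `S` when a fixed edge set `J₀` is replaced by its symmetric difference
with `S`. -/
def gain (c : Sym2 V → ℤ) (J₀ S : Finset (Sym2 V)) : ℤ :=
  ∑ e ∈ S, if e ∈ J₀ then -c e else c e

lemma sum_symmDiff_gain (c : Sym2 V → ℤ) (J₀ S : Finset (Sym2 V)) :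
    ∑ e ∈ symmDiff J₀ S, c e = ∑ e ∈ J₀, c e + gain c J₀ S :=
  sum_symmDiff_aux c J₀ S

lemma gain_sdiff (c : Sym2 V → ℤ) (J₀ : Finset (Sym2 V)) {Q S : Finset (Sym2 V)} (h : Q ⊆ S) :
    gain c J₀ S = gain c J₀ (S \ Q) + gain c J₀ Q :=
  (Finset.sum_sdiff h).symm

/-- An edge set joining a neighbour `u` of a bottom component `B` to `v` has gain at least
`μ v - (m + 1)` with respect to a shortest edge set rooted in `B`. -/
lemma gain_path (h : Potential G R t f c μ) (hm : ∀ x ∈ R, m ≤ μ x)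
    (hB : IsComp G (R.filter fun x => μ x ≤ m) B) {b₀ : V} (hb₀ : b₀ ∈ B) {J₀ : Finset (Sym2 V)}
    (hJ : IsBd G (t + pt b₀) J₀) (hJc : ∑ e ∈ J₀, c e = m) {b u v : V} (hb : b ∈ B)
    (hbu : G.Adj b u) (hv : v ∈ R) {Q : Finset (Sym2 V)} (hQ : IsBd G (pt u + pt v) Q) :
    μ v ≤ m + 1 + gain c J₀ Q := by
  obtain ⟨Z, hZ, hZc⟩ := zero_bottom h hm hB hb₀ hb
  have h1 := h.lb v hv _ ((((hJ.symmDiff hQ).symmDiff hZ).symmDiff (IsBd.edge hbu)).cast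
    (b := t + pt v)
    (by linear_combination add_self_fun (pt b) + add_self_fun (pt b₀) + add_self_fun (pt u)))
  have h2 := sum_symmDiff_le h.c01 (symmDiff (symmDiff J₀ Q) Z) {s(b, u)}
  have h3 := sum_symmDiff_le h.c01 (symmDiff J₀ Q) Z
  have h4 := sum_symmDiff_gain c J₀ Q
  have h5 := h.c01 s(b, u)
  simp only [Finset.sum_singleton] at h2
  omega

lemma zmod_two_eq_one {z : ZMod 2} (h : z ≠ 0) : z = 1 := by
  revert z; decide

/-- An edge set all of whose odd vertices are neighbours of a bottom component `B` has nonnegative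
gain with respect to a shortest edge set rooted in `B`. -/
lemma gain_nonneg (h : Potential G R t f c μ) (hm : ∀ x ∈ R, m ≤ μ x)
    (hB : IsComp G (R.filter fun x => μ x ≤ m) B) {b₀ : V} (hb₀ : b₀ ∈ B) {J₀ : Finset (Sym2 V)}
    (hJ : IsBd G (t + pt b₀) J₀) (hJc : ∑ e ∈ J₀, c e = m) (S : Finset (Sym2 V))
    (hS : ∀ e ∈ S, e ∈ G.edgeSet)
    (hN : ∀ v, bd S v ≠ 0 → v ∉ B ∧ ∃ b ∈ B, G.Adj b v) : 0 ≤ gain c J₀ S := by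
  induction S using Finset.strongInduction with | _ S ih =>
  by_cases h0 : bd S = 0
  · have h1 := h.lb b₀ (mem_bottom hm hB hb₀).1 _
      ((hJ.symmDiff ⟨hS, h0⟩).cast (b := t + pt b₀) (by simp))
    rw [sum_symmDiff_gain, (mem_bottom hm hB hb₀).2] at h1
    omega
  · obtain ⟨u, hu⟩ := Function.ne_iff.1 h0
    obtain ⟨v, hvu, hv, hreach⟩ := exists_walk_of_bd G S hS u (zmod_two_eq_one hu)
    obtain ⟨Q, hQS, hQ⟩ := exists_sub_of_reachable S hreach
    obtain ⟨huB, b, hb, hbu⟩ := hN u hu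
    obtain ⟨hvB, b', hb', hbv⟩ := hN v (by rw [hv]; decide)
    obtain ⟨hvR, hvm, -⟩ := nbr_bottom h hm hB hb' hvB hbv
    have h1 := gain_path h hm hB hb₀ hJ hJc hb hbu hvR ⟨fun e he => hS e (hQS he), hQ⟩
    have hQne : Q.Nonempty := by
      rw [Finset.nonempty_iff_ne_empty]
      rintro rfl
      have := congrFun hQ v
      simp [bd, pt, hvu] at this
    have h2 := ih (S \ Q) (Finset.sdiff_ssubset hQS hQne)
      (fun e he => hS e (Finset.sdiff_subset he)) (by
        intro w hw
        by_cases hwu : w = u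
        · exact hwu ▸ hN u hu
        by_cases hwv : w = v
        · exact hwv ▸ hN v (by rw [hv]; decide)
        refine hN w ?_
        rwa [bd_sdiff hQS, hQ, Pi.add_apply, Pi.add_apply, pt, pt, Pi.single_eq_of_ne hwu,
          Pi.single_eq_of_ne hwv, add_zero, add_zero] at hw)
    rw [gain_sdiff c J₀ hQS]
    omega

/-- The analogue of `gain_nonneg` in which one more vertex `x` outside `B`, not necessarily a
neighbour of `B`, may be odd. -/
lemma le_gain (h : Potential G R t f c μ) (hm : ∀ x ∈ R, m ≤ μ x)
    (hB : IsComp G (R.filter fun x => μ x ≤ m) B) {b₀ : V} (hb₀ : b₀ ∈ B) {J₀ : Finset (Sym2 V)}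
    (hJ : IsBd G (t + pt b₀) J₀) (hJc : ∑ e ∈ J₀, c e = m) (S : Finset (Sym2 V))
    (hS : ∀ e ∈ S, e ∈ G.edgeSet) {x : V} (hx : x ∈ R) (hxB : x ∉ B)
    (hxS : (∃ b ∈ B, G.Adj b x) ∨ bd S x = 1)
    (hN : ∀ v, v ≠ x → bd S v ≠ 0 → v ∉ B ∧ ∃ b ∈ B, G.Adj b v) :
    μ x ≤ m + 1 + gain c J₀ S := by
  by_cases hNx : ∃ b ∈ B, G.Adj b x
  · have h1 := gain_nonneg h hm hB hb₀ hJ hJc S hS (by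
      intro v hv
      by_cases hvx : v = x
      · exact hvx ▸ ⟨hxB, hNx⟩
      · exact hN v hvx hv)
    obtain ⟨b, hb, hbx⟩ := hNx
    have := (nbr_bottom h hm hB hb hxB hbx).2.1
    omega
  · have hx1 := hxS.resolve_left hNx
    obtain ⟨v, hvx, hv, hreach⟩ := exists_walk_of_bd G S hS x hx1
    obtain ⟨Q, hQS, hQ⟩ := exists_sub_of_reachable S hreach
    obtain ⟨hvB, b, hb, hbv⟩ := hN v hvx (by rw [hv]; decide)
    have h1 := gain_path h hm hB hb₀ hJ hJc hb hbv hx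
      ⟨fun e he => hS e (hQS he), hQ.trans (add_comm _ _)⟩
    have h2 := gain_nonneg h hm hB hb₀ hJ hJc (S \ Q)
      (fun e he => hS e (Finset.sdiff_subset he)) (by
        intro w hw
        have hw' : bd (S \ Q) w = bd S w + (pt x w + pt v w) := by
          rw [bd_sdiff hQS, hQ]; rfl
        by_cases hwx : w = x
        · subst hwx
          rw [hw', hx1] at hw
          simp [pt, hvx.symm] at hw
          exact absurd (by decide) hw
        by_cases hwv : w = v
        · exact hwv ▸ hN v hvx (by rw [hv]; decide)
        refine hN w hwx ?_
        rwa [hw', pt, pt, Pi.single_eq_of_ne hwx,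
          Pi.single_eq_of_ne hwv, add_zero, add_zero] at hw)
    rw [gain_sdiff c J₀ hQS]
    omega

/-- The contraction of a bottom component does not decrease the potential by more than one outside
it, and not at all inside. An edge set is compared with a shortest edge set rooted in `B`: the
part of their symmetric difference that avoids `B` has its odd vertices among the neighbours of
`B` and `x`. -/
lemma contract_lb (h : Potential G R t f c μ) (hm : ∀ x ∈ R, m ≤ μ x)
    (hB : IsComp G (R.filter fun x => μ x ≤ m) B) {x : V} (hx : x ∈ R) {J : Finset (Sym2 V)}
    (hJ : IsBd G (t + pt x) J) :
    μ x - (if x ∈ B then 0 else 1) ≤ ∑ e ∈ J, contract c B e := by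
  classical
  obtain ⟨b₀, hb₀, -⟩ := hB.1
  obtain ⟨hb₀R, hb₀m⟩ := mem_bottom hm hB hb₀
  obtain ⟨J₀, hJ₀, hJ₀c⟩ := h.att b₀ hb₀R
  rw [hb₀m] at hJ₀c
  set S := symmDiff J₀ J with hSdef
  have hJS : J = symmDiff J₀ S := by rw [hSdef, symmDiff_symmDiff_cancel_left]
  have hS : IsBd G (pt x + pt b₀) S := (hJ₀.symmDiff hJ).cast
    (by linear_combination add_self_fun t)
  have h0 : ∑ e ∈ J₀, contract c B e = m := by
    have := contract_add_card h hm hB hJ₀.1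
    rw [cross_bottom_eq_empty h hm hB hb₀ hJ₀ hJ₀c] at this
    simpa [hJ₀c] using this
  let S' := S.filter fun e => ¬ ∃ v ∈ e, v ∈ B
  have hgain : gain (contract c B) J₀ S = gain c J₀ S' := by
    rw [gain, gain, Finset.sum_filter]
    refine Finset.sum_congr rfl fun e _ => ?_
    by_cases he : ∃ v ∈ e, v ∈ B <;> simp only [contract, he] <;> simp
  have hS' : ∀ e ∈ S', e ∈ G.edgeSet := fun e he => hS.1 e (Finset.mem_filter.1 he).1
  have hin : ∀ v ∈ B, bd S' v = 0 := by
    intro v hv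
    refine Finset.sum_eq_zero fun e he => if_neg fun hve => ?_
    exact (Finset.mem_filter.1 he).2 ⟨v, hve, hv⟩
  have hout : ∀ v ∉ B, (¬ ∃ b ∈ B, G.Adj b v) → bd S' v = bd S v := by
    intro v hv hN
    rw [bd, bd, Finset.sum_filter]
    refine Finset.sum_congr rfl fun e he => ?_
    by_cases hve : v ∈ e
    · rw [if_pos]
      rintro ⟨b, hbe, hb⟩
      have hbv : b ≠ v := fun h => hv (h ▸ hb)
      obtain rfl : e = s(b, v) := (Sym2.mem_and_mem_iff hbv).1 ⟨hbe, hve⟩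
      exact hN ⟨b, hb, hS.1 _ he⟩
    · simp [hve]
  have hother : ∀ v, v ≠ x → bd S' v ≠ 0 → v ∉ B ∧ ∃ b ∈ B, G.Adj b v := by
    intro v hvx hv
    have hvB : v ∉ B := fun hvB => hv (hin v hvB)
    refine ⟨hvB, ?_⟩
    by_contra hN
    rw [hout v hvB hN, hS.2] at hv
    have : v ≠ b₀ := fun h => hvB (h ▸ hb₀)
    simp [pt, hvx, this] at hv
  rw [hJS, sum_symmDiff_gain, h0, hgain]
  by_cases hxB : x ∈ B
  · have h1 := gain_nonneg h hm hB hb₀ hJ₀ hJ₀c S' hS' (by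
      intro v hv
      by_cases hvx : v = x
      · exact absurd (hin v (hvx ▸ hxB)) hv
      · exact hother v hvx hv)
    have h2 := (mem_bottom hm hB hxB).2
    simp only [hxB, if_true]
    omega
  · have h1 := le_gain h hm hB hb₀ hJ₀ hJ₀c S' hS' hx hxB (by
      by_cases hN : ∃ b ∈ B, G.Adj b x
      · exact Or.inl hN
      · right
        rw [hout x hxB hN, hS.2]
        have : x ≠ b₀ := fun h => hxB (h ▸ hb₀)
        simp [pt, this]) hother
    simp only [hxB, if_false]
    omega

/-- A shortest edge set leaves a bottom component exactly once, unless it is rooted there. -/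
lemma card_cross_min (h : Potential G R t f c μ) (hm : ∀ x ∈ R, m ≤ μ x)
    (hB : IsComp G (R.filter fun x => μ x ≤ m) B) {x : V} (hx : x ∈ R) {J : Finset (Sym2 V)}
    (hJ : IsBd G (t + pt x) J) (hJc : ∑ e ∈ J, c e = μ x) :
    (cross J B).card = if x ∈ B then 0 else 1 := by
  have h1 := contract_lb h hm hB hx hJ
  have h2 := contract_add_card h hm hB hJ.1
  have h3 := card_cross_bottom h hm hB hJ
  split_ifs at h1 h3 ⊢ with hxB
  · omega
  · have : (cross J B).card ≠ 0 := fun h0 => by rw [h0] at h3; simp at h3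
    omega

/-- The contraction of a bottom component gives again a potential, with the labels on `B` changed
so that they agree with those of its neighbours. -/
lemma contract_potential (h : Potential G R t f c μ) (hm : ∀ x ∈ R, m ≤ μ x)
    (hB : IsComp G (R.filter fun x => μ x ≤ m) B) :
    Potential G R t (fun v => if v ∈ B then f v + 1 else f v) (contract c B)
      (fun x => μ x - if x ∈ B then 0 else 1) where
  c01 e := by
    unfold contract
    split_ifs
    · exact Or.inl rfl
    · exact h.c01 e
  par u v huv := by
    have hp := h.par u v huv
    have e1 : ∀ a b : ZMod 2, a + 1 + (b + 1) = a + b := by decide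
    have e2 : ∀ a b : ZMod 2, 1 = a + b → 0 = a + 1 + b := by decide
    have e3 : ∀ a b : ZMod 2, 1 = a + b → 0 = a + (b + 1) := by decide
    by_cases hu : u ∈ B <;> by_cases hv : v ∈ B
    · have := h.abs_sub (mem_bottom hm hB hu).1 huv
      rw [(mem_bottom hm hB hu).2, (mem_bottom hm hB hv).2] at this
      simp only [sub_self, abs_zero] at this
      rw [← this] at hp
      simp only [contract, Sym2.mem_iff, hu, hv, if_true, e1, ← hp]
      simp [hu]
    · rw [(nbr_bottom h hm hB hu hv huv).2.2] at hp
      simp [contract, hu, hv]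
      exact e2 _ _ (by simpa using hp)
    · have := (nbr_bottom h hm hB hv hu huv.symm).2.2
      rw [Sym2.eq_swap] at this
      rw [this] at hp
      simp [contract, hu, hv]
      exact e3 _ _ (by simpa using hp)
    · simp [contract, hu, hv, hp]
  clo := h.clo
  att x hx := by
    obtain ⟨J, hJ, hJc⟩ := h.att x hx
    refine ⟨J, hJ, ?_⟩
    have h1 := contract_add_card h hm hB hJ.1
    have h2 := card_cross_min h hm hB hx hJ hJc
    rw [h2] at h1
    split_ifs at h1 ⊢ <;> push_cast at h1 <;> omega
  lb x hx J hJ := contract_lb h hm hB hx hJ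

lemma contract_min (h : Potential G R t f c μ) (hm : ∀ x ∈ R, m ≤ μ x)
    (hB : IsComp G (R.filter fun x => μ x ≤ m) B) {x : V} (hx : x ∈ R) {J : Finset (Sym2 V)}
    (hJ : IsBd G (t + pt x) J) (hJc : ∑ e ∈ J, c e = μ x) :
    ∑ e ∈ J, contract c B e = μ x - if x ∈ B then 0 else 1 := by
  have h1 := contract_add_card h hm hB hJ.1
  have h2 := card_cross_min h hm hB hx hJ hJc
  rw [h2] at h1
  split_ifs at h1 ⊢ <;> push_cast at h1 <;> omega

end Bottom

/-! ### Sebő's theorem on the components of level sets -/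

lemma exists_comp (G : SimpleGraph V) (U : Finset V) {x : V} (hx : x ∈ U) :
    ∃ B, IsComp G U B := by
  classical
  let r : V → V → Prop := fun a b => G.Adj a b ∧ b ∈ U
  let B : Finset V := Finset.univ.filter fun y => Relation.ReflTransGen r x y
  have hB : ∀ y, y ∈ B ↔ Relation.ReflTransGen r x y := fun y => by simp [B]
  refine ⟨B, ⟨x, (hB x).2 .refl, fun y hy => ?_⟩, fun y hy => ?_, fun a ha b hb hab => ?_⟩
  · rw [hB] at hy
    induction hy with
    | refl => exact .refl
    | @tail y z hxy hyz ih => exact ih.tail ⟨hyz.1, (hB z).2 (hxy.tail hyz)⟩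
  · rw [hB] at hy
    rcases Relation.ReflTransGen.cases_tail hy with h | ⟨_, _, h⟩
    · exact h ▸ hx
    · exact h.2
  · exact (hB b).2 (((hB a).1 ha).tail ⟨hab, hb⟩)

/-- **Sebő's theorem** on the components `K` of the level sets of a potential, obtained by
contracting bottom components one after the other: a shortest edge set leaves `K` exactly once
unless it is rooted in `K`, and it stays shortest when the root is replaced by a pair of vertices
of `K` of maximal potential added to its boundary. -/
theorem sebo (n : ℕ) : ∀ {f : V → ZMod 2} {c : Sym2 V → ℤ} {μ : V → ℤ}
    (_ : Potential G R t f c μ) (i : ℤ) (_ : ∑ x ∈ R, (i - μ x).toNat = n) {K : Finset V}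
    (_ : IsComp G (R.filter fun x => μ x ≤ i) K) {x : V} (_ : x ∈ R) {J : Finset (Sym2 V)}
    (_ : IsBd G (t + pt x) J) (_ : ∑ e ∈ J, c e = μ x),
    (cross J K).card = (if x ∈ K then 0 else 1) ∧
    ∀ S a b, a ∈ K → b ∈ K → μ a = i → μ b = i → IsBd G (pt a + pt b) S →
      ∑ e ∈ J, c e ≤ ∑ e ∈ symmDiff J S, c e := by
  induction n using Nat.strong_induction_on with | _ n ih =>
  intro f c μ h i hn K hK x hx J hJ hJc
  obtain ⟨x₀, hx₀, hmin⟩ := R.exists_min_image μ ⟨x, hx⟩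
  obtain ⟨k, hk, -⟩ := id hK.1
  have hkR := Finset.mem_filter.1 (hK.2.1 hk)
  rcases (le_trans (hmin k hkR.1) hkR.2).eq_or_lt with heq | hlt
  · rw [← heq] at hK
    refine ⟨card_cross_min h hmin hK hx hJ hJc, fun S a b ha hb _ _ hS => ?_⟩
    obtain ⟨Z, hZ, hZc⟩ := zero_bottom h hmin hK ha hb
    have h1 := h.lb x hx _ (((hJ.symmDiff hS).symmDiff hZ).cast
      (by linear_combination add_self_fun (pt a) + add_self_fun (pt b)))
    have h2 := sum_symmDiff_le h.c01 (symmDiff J S) Z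
    omega
  · obtain ⟨B, hB⟩ := exists_comp G (R.filter fun y => μ y ≤ μ x₀)
      (Finset.mem_filter.2 ⟨hx₀, le_rfl⟩)
    have h' := contract_potential h hmin hB
    have hU : (R.filter fun x => μ x ≤ i) =
        R.filter fun x => (μ x - if x ∈ B then 0 else 1) ≤ i - 1 := by
      refine Finset.filter_congr fun y _ => ?_
      by_cases hy : y ∈ B
      · have := (mem_bottom hmin hB hy).2
        simp only [hy, if_true]; omega
      · simp only [hy, if_false]; omega
    rw [hU] at hK
    obtain ⟨b₀, hb₀, -⟩ := id hB.1
    have hmeas : ∑ y ∈ R, (i - 1 - (μ y - if y ∈ B then 0 else 1)).toNat < n := by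
      rw [← hn]
      refine Finset.sum_lt_sum (fun y hy => ?_) ⟨b₀, (mem_bottom hmin hB hb₀).1, ?_⟩
      · split_ifs <;> omega
      · have := (mem_bottom hmin hB hb₀).2
        simp only [hb₀, if_true]; omega
    have hJc' := contract_min h hmin hB hx hJ hJc
    obtain ⟨h1, h2⟩ := ih _ hmeas h' (i - 1) rfl hK hx hJ hJc'
    refine ⟨h1, fun S a b ha hb hai hbi hS => ?_⟩
    have hnB : ∀ y, μ y = i → y ∉ B := fun y hy hyB => by
      have := (mem_bottom hmin hB hyB).2
      omega
    have h3 := h2 S a b ha hb (by simp [hnB a hai, hai]) (by simp [hnB b hbi, hbi]) hS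
    have h4 := contract_add_card h hmin hB hJ.1
    have hJS := hJ.symmDiff hS
    have h5 := contract_add_card h hmin hB hJS.1
    have h6 := card_cross_min h hmin hB hx hJ hJc
    -- The cut of `B` is met with the same parity before and after the exchange.
    have h7 : ((cross (symmDiff J S) B).card : ZMod 2) = (cross J B).card := by
      rw [card_cross G _ hJS.1, card_cross G _ hJ.1, hJS.2, hJ.2]
      refine Finset.sum_congr rfl fun v hv => ?_
      have h8 : v ≠ a := fun h => hnB a hai (h ▸ hv)
      have h9 : v ≠ b := fun h => hnB b hbi (h ▸ hv)
      simp [pt, h8, h9]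
    have h8 : (cross J B).card ≤ (cross (symmDiff J S) B).card := by
      rw [h6] at h7 ⊢
      split_ifs at h7 ⊢
      · omega
      · by_contra hlt
        have : (cross (symmDiff J S) B).card = 0 := by omega
        rw [this] at h7
        simp at h7
    omega

end Potential

/-! ### Weights of walks and of edge sets -/

section Walks

variable {G : SimpleGraph V}

lemma bd_walk {u v : V} (p : G.Walk u v) (hp : p.IsTrail) :
    IsBd G (pt u + pt v) p.edges.toFinset := by
  refine ⟨fun e he => p.edges_subset_edgeSet (List.mem_toFinset.1 he), ?_⟩
  induction p with
  | nil => rw [add_self_fun]; rfl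
  | @cons a b c hab p ih =>
    rw [SimpleGraph.Walk.isTrail_cons] at hp
    rw [SimpleGraph.Walk.edges_cons, List.toFinset_cons, Finset.insert_eq, bd_union (by
      simpa using hp.2), ih hp.1, bd_single hab.ne]
    linear_combination add_self_fun (pt b)

lemma walkWt_eq_gain {F : Set (Sym2 V)} {J : Finset (Sym2 V)} (hJ : ∀ e, e ∈ J ↔ e ∈ F)
    {u v : V} (p : G.Walk u v) (hp : p.IsTrail) :
    walkWt F p = Potential.gain (fun _ => 1) J p.edges.toFinset := by
  rw [Potential.gain, List.sum_toFinset _ hp.edges_nodup, walkWt]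
  congr 1
  refine List.map_congr_left fun e _ => ?_
  by_cases h : e ∈ F
  · simp [edgeWt, h, (hJ e).2 h]
  · simp [edgeWt, h, mt (hJ e).1 h]

lemma card_symmDiff_gain (J S : Finset (Sym2 V)) :
    ((symmDiff J S).card : ℤ) = J.card + Potential.gain (fun _ => 1) J S := by
  have := Potential.sum_symmDiff_gain (fun _ => 1) J S
  simpa using this

/-- The edge set `J` has the least size among the edge sets with the same boundary. -/
def IsLeastBd (G : SimpleGraph V) (J : Finset (Sym2 V)) : Prop :=
  (∀ e ∈ J, e ∈ G.edgeSet) ∧ ∀ J', IsBd G (bd J) J' → J.card ≤ J'.card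

lemma IsLeastBd.gain_nonneg {J S : Finset (Sym2 V)} (hJ : IsLeastBd G J) (hS : IsBd G 0 S) :
    0 ≤ Potential.gain (fun _ => 1) J S := by
  have h1 := hJ.2 _ (((show IsBd G (bd J) J from ⟨hJ.1, rfl⟩).symmDiff hS).cast (add_zero _))
  have h2 := card_symmDiff_gain J S
  omega

lemma bddBelow_walkWt {F : Set (Sym2 V)} {J : Finset (Sym2 V)} (hJ : ∀ e, e ∈ J ↔ e ∈ F)
    (a b : V) : BddBelow {n : ℤ | ∃ p : G.Walk a b, p.IsPath ∧ walkWt F p = n} := by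
  refine ⟨-J.card, ?_⟩
  rintro n ⟨p, hp, rfl⟩
  rw [walkWt_eq_gain hJ p hp.isTrail]
  have := card_symmDiff_gain J p.edges.toFinset
  omega

lemma exists_path_eq_distF {F : Set (Sym2 V)} {J : Finset (Sym2 V)} (hJ : ∀ e, e ∈ J ↔ e ∈ F)
    {a b : V} (hab : G.Reachable a b) :
    ∃ p : G.Walk a b, p.IsPath ∧ walkWt F p = distF G F a b := by
  obtain ⟨p, hp⟩ := hab.exists_isPath
  exact Int.csInf_mem (s := {n : ℤ | ∃ p : G.Walk a b, p.IsPath ∧ walkWt F p = n})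
    ⟨_, p, hp, rfl⟩ (bddBelow_walkWt hJ a b)

/-- Every edge set with boundary `pt a + pt b`, not only a path, has weight at least
the distance, because the even remainder beyond a path has nonnegative weight. -/
lemma distF_le_gain {F : Set (Sym2 V)} {J : Finset (Sym2 V)} (hJ : ∀ e, e ∈ J ↔ e ∈ F)
    (hmin : IsLeastBd G J) {a b : V} {S : Finset (Sym2 V)} (hS : IsBd G (pt a + pt b) S) :
    distF G F a b ≤ Potential.gain (fun _ => 1) J S := by
  have hreach : (SimpleGraph.fromEdgeSet (S : Set (Sym2 V))).Reachable a b := by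
    by_cases hab : a = b
    · exact hab ▸ .refl _
    · have h1 : bd S a = 1 := by rw [hS.2]; simp [pt, hab]
      obtain ⟨v, hva, hv, h⟩ := exists_walk_of_bd G S hS.1 a h1
      have : v = b := by
        by_contra hvb
        rw [hS.2] at hv
        simp [pt, hva, hvb] at hv
      exact this ▸ h
  obtain ⟨p, hp⟩ := hreach.exists_isPath
  have hle : SimpleGraph.fromEdgeSet (S : Set (Sym2 V)) ≤ G := by
    intro x y hxy
    rw [SimpleGraph.fromEdgeSet_adj] at hxy
    exact hS.1 _ hxy.1
  have hq : (p.mapLe hle).IsPath := hp.mapLe hle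
  have hsub : (p.mapLe hle).edges.toFinset ⊆ S := by
    intro e he
    rw [List.mem_toFinset, SimpleGraph.Walk.edges_mapLe_eq_edges] at he
    have := p.edges_subset_edgeSet he
    rw [SimpleGraph.edgeSet_fromEdgeSet] at this
    exact this.1
  have hb := bd_walk _ hq.isTrail
  have h1 : distF G F a b ≤ walkWt F (p.mapLe hle) :=
    csInf_le (bddBelow_walkWt hJ a b) ⟨_, hq, rfl⟩
  have h2 := hmin.gain_nonneg (S := S \ (p.mapLe hle).edges.toFinset)
    ⟨fun e he => hS.1 e (Finset.sdiff_subset he), by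
      rw [bd_sdiff hsub, hS.2, hb.2, add_self_fun]⟩
  rw [walkWt_eq_gain hJ _ hq.isTrail] at h1
  rw [Potential.gain_sdiff _ J hsub]
  omega

/-- A walk from outside `K` that meets `K` splits at the edge on which it first enters `K`. -/
lemma exists_first_entry (K : Set V) {a b : V} (p : G.Walk a b) (ha : a ∉ K) {z : V}
    (hz : z ∈ p.support) (hzK : z ∈ K) :
    ∃ (x u : V) (q : G.Walk a u) (h : G.Adj u x) (p₂ : G.Walk x b),
      p = q.append (SimpleGraph.Walk.cons h p₂) ∧ x ∈ K ∧ ∀ v ∈ q.support, v ∉ K := by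
  induction p with
  | nil =>
    rw [SimpleGraph.Walk.support_nil, List.mem_singleton] at hz
    exact absurd (hz ▸ hzK) ha
  | @cons a c b hac p ih =>
    by_cases hc : c ∈ K
    · exact ⟨c, a, .nil, hac, p, rfl, hc, by simpa using ha⟩
    · rw [SimpleGraph.Walk.support_cons, List.mem_cons] at hz
      obtain ⟨x, u, q, h, p₂, hp, hx, hq⟩ :=
        ih hc (hz.resolve_left fun h => ha (h ▸ hzK))
      refine ⟨x, u, .cons hac q, h, p₂, by rw [hp]; rfl, hx, fun v hv => ?_⟩
      rw [SimpleGraph.Walk.support_cons, List.mem_cons] at hv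
      rcases hv with rfl | hv
      · exact ha
      · exact hq v hv

lemma isLeast_of_isMinJoin {T : Set V} {F : Set (Sym2 V)} (hF : IsMinJoin G T F)
    {J : Finset (Sym2 V)} (hJ : ∀ e, e ∈ J ↔ e ∈ F) : IsLeastBd G J := by
  classical
  have hodd : ∀ (S : Finset (Sym2 V)) (v : V),
      bd S v = 1 ↔ Odd ({e ∈ (S : Set (Sym2 V)) | v ∈ e}).ncard := by
    intro S v
    have h1 : {e ∈ (S : Set (Sym2 V)) | v ∈ e} = ((S.filter fun e => v ∈ e : Finset _) : Set _) := by
      ext e; simp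
    rw [h1, Set.ncard_coe_finset, ← ZMod.natCast_eq_one_iff_odd, Finset.card_filter, bd]
    push_cast
    rfl
  have hJF : (J : Set (Sym2 V)) = F := Set.ext hJ
  refine ⟨fun e he => hF.1.1 ((hJ e).1 he), fun J' hJ' => ?_⟩
  rw [← Set.ncard_coe_finset J, hJF, hF.2]
  refine Nat.sInf_le ⟨J', ⟨fun e he => hJ'.1 e he, fun v => ?_⟩, Set.ncard_coe_finset J'⟩
  rw [← hodd, hJ'.2, hodd, hJF]
  exact hF.1.2 v

/-- The distances from `r`, shifted by the size of the minimum join, form a potential for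
unit lengths. -/
lemma potential_distF {F : Set (Sym2 V)} {J : Finset (Sym2 V)} (hJ : ∀ e, e ∈ J ↔ e ∈ F)
    (hmin : IsLeastBd G J) (hbip : G.Colorable 2) (r : V) (R : Finset V)
    (hR : ∀ x, x ∈ R ↔ G.Reachable r x) :
    ∃ f, Potential G R (bd J + pt r) f (fun _ => 1) (fun x => distF G F r x + J.card) := by
  obtain ⟨C⟩ := hbip
  refine ⟨fun v => if C v = 0 then 0 else 1, ⟨fun _ => Or.inr rfl, fun u v huv => ?_,
    fun u hu v huv => (hR v).2 (((hR u).1 hu).trans huv.reachable), fun x hx => ?_,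
    fun x hx S hS => ?_⟩⟩
  · have hne := C.valid huv
    generalize C u = a at *
    generalize C v = b at *
    revert a b
    decide
  · obtain ⟨p, hp, hpd⟩ := exists_path_eq_distF hJ ((hR x).1 hx)
    refine ⟨symmDiff J p.edges.toFinset,
      ((show IsBd G (bd J) J from ⟨hmin.1, rfl⟩).symmDiff (bd_walk p hp.isTrail)).cast
      (add_assoc _ _ _).symm, ?_⟩
    rw [← hpd, walkWt_eq_gain hJ p hp.isTrail, Potential.sum_symmDiff_gain]
    simp [add_comm]
  · have h1 := distF_le_gain hJ hmin (a := r) (b := x) (S := symmDiff J S)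
      (((show IsBd G (bd J) J from ⟨hmin.1, rfl⟩).symmDiff hS).cast
        (by linear_combination add_self_fun (bd J)))
    have h2 := card_symmDiff_gain J (symmDiff J S)
    rw [symmDiff_symmDiff_cancel_left] at h2
    simp only [Finset.sum_const, mul_one, nsmul_eq_mul]
    omega

end Walks

/-! ### The beam of a distance component -/

section Beam

variable {G : SimpleGraph V} {F : Set (Sym2 V)} {J : Finset (Sym2 V)} {R K : Finset V}
  {f : V → ZMod 2} {r : V} {i : ℤ}

/-- The distance to an unreachable vertex is the infimum of the empty set, which is `0` in `ℤ`. -/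
lemma distF_eq_zero_of_not_reachable {a b : V} (h : ¬ G.Reachable a b) : distF G F a b = 0 := by
  have : {n : ℤ | ∃ p : G.Walk a b, p.IsPath ∧ walkWt F p = n} = ∅ := by
    ext n
    simp only [Set.mem_ofPred_eq, Set.mem_empty_iff_false, iff_false]
    rintro ⟨p, -⟩
    exact h ⟨p⟩
  rw [distF, this, Int.csInf_empty]

lemma distF_self (hJ : ∀ e, e ∈ J ↔ e ∈ F) (hmin : IsLeastBd G J) (r : V) :
    distF G F r r = 0 := by
  have h0 : IsBd G (pt r + pt r) ∅ := ⟨by simp, by rw [add_self_fun]; rfl⟩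
  have h1 := distF_le_gain hJ hmin h0
  obtain ⟨p, hp, hpd⟩ := exists_path_eq_distF (F := F) hJ (SimpleGraph.Reachable.refl (G := G) r)
  have h2 := hmin.gain_nonneg ((bd_walk p hp.isTrail).cast (add_self_fun _))
  rw [← walkWt_eq_gain hJ p hp.isTrail, hpd] at h2
  exact le_antisymm (by simpa [Potential.gain] using h1) h2

/-- A component of a level set in the sense of `IsComponentOf` is one in the sense of `IsComp`,
provided one of its vertices is reachable from the root. -/
lemma isComp_of_isComponentOf {K' : Set V} (hK' : ∀ v, v ∈ K ↔ v ∈ K')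
    (hR : ∀ x, x ∈ R ↔ G.Reachable r x) (h : IsComponentOf G {x | distF G F r x ≤ i} K')
    {x : V} (hx : x ∈ K) (hxR : x ∈ R) (n : ℤ) :
    IsComp G (R.filter fun x => distF G F r x + n ≤ i + n) K := by
  have hreach : ∀ y ∈ K, Relation.ReflTransGen (fun a b => G.Adj a b ∧ b ∈ K) x y := by
    intro y hy
    have h1 := h.2.2.1.preconnected ⟨x, (hK' x).1 hx⟩ ⟨y, (hK' y).1 hy⟩
    rw [SimpleGraph.reachable_iff_reflTransGen] at h1
    exact Relation.ReflTransGen.lift (fun a : K' => (a : V))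
      (fun a b hab => ⟨hab, (hK' b).2 b.2⟩) _ _ h1
  refine ⟨⟨x, hx, hreach⟩, fun y hy => ?_, fun a ha b hb hab => ?_⟩
  · have h1 : Relation.ReflTransGen G.Adj x y := by
      exact Relation.ReflTransGen.lift id (fun _ _ hab => hab.1) _ _ (hreach y hy)
    rw [← SimpleGraph.reachable_iff_reflTransGen] at h1
    have h2 := h.2.1 ((hK' y).1 hy)
    simp only [Set.mem_ofPred_eq] at h2
    exact Finset.mem_filter.2 ⟨(hR y).2 (((hR x).1 hxR).trans h1), by omega⟩
  · have h2 := (Finset.mem_filter.1 hb).2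
    exact (hK' b).2 (h.2.2.2 a ((hK' a).1 ha) b (by simp only [Set.mem_ofPred_eq]; omega) hab)

/-- An end in `K` of an edge leaving the component `K` is at the level of `K`. -/
lemma distF_eq_of_adj
    (hP : Potential G R (bd J + pt r) f (fun _ => 1) fun x => distF G F r x + J.card)
    (hK : IsComp G (R.filter fun x => distF G F r x + (J.card : ℤ) ≤ i + J.card) K)
    {x u : V} (hx : x ∈ K) (hu : u ∉ K) (hxu : G.Adj x u) : distF G F r x = i := by
  obtain ⟨hxR, hxi⟩ := Finset.mem_filter.1 (hK.2.1 hx)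
  have h1 := hP.abs_sub hxR hxu
  have h2 : ¬ distF G F r u + (J.card : ℤ) ≤ i + J.card := fun h =>
    hu (hK.2.2 x hx u (Finset.mem_filter.2 ⟨hP.clo x hxR u hxu, h⟩) hxu)
  simp only [add_sub_add_right_eq_sub] at h1
  rcases abs_eq one_pos.le |>.1 h1 with h | h <;> omega

/-- The beam is the only edge of the minimum join leaving `K`. -/
lemma cross_beam (hJ : ∀ e, e ∈ J ↔ e ∈ F) (hmin : IsLeastBd G J)
    (hP : Potential G R (bd J + pt r) f (fun _ => 1) fun x => distF G F r x + J.card)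
    (hK : IsComp G (R.filter fun x => distF G F r x + (J.card : ℤ) ≤ i + J.card) K)
    (hr : r ∈ R) (hrK : r ∉ K) {x y : V} (hxy : s(x, y) ∈ J) (hx : x ∈ K) (hy : y ∉ K) :
    cross J K = {s(x, y)} := by
  have h1 := (hP.sebo _ _ rfl hK hr (J := J)
    ⟨hmin.1, by linear_combination -add_self_fun (pt r)⟩ (by simp [distF_self hJ hmin])).1
  rw [if_neg hrK] at h1
  obtain ⟨e, he⟩ := Finset.card_eq_one.1 h1
  have h2 : s(x, y) ∈ cross J K :=
    mem_cross.2 ⟨hxy, ⟨x, by simp, hx⟩, y, by simp, hy⟩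
  rw [he, Finset.mem_singleton] at h2
  rw [he, h2]

/-- An edge set joining two vertices of `K` at the level of `K` has nonnegative weight. -/
lemma gain_pair_nonneg (hJ : ∀ e, e ∈ J ↔ e ∈ F) (hmin : IsLeastBd G J)
    (hP : Potential G R (bd J + pt r) f (fun _ => 1) fun x => distF G F r x + J.card)
    (hK : IsComp G (R.filter fun x => distF G F r x + (J.card : ℤ) ≤ i + J.card) K)
    (hr : r ∈ R) {x y : V} (hx : x ∈ K) (hy : y ∈ K) (hxi : distF G F r x = i)
    (hyi : distF G F r y = i) {S : Finset (Sym2 V)} (hS : IsBd G (pt x + pt y) S) :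
    0 ≤ Potential.gain (fun _ => 1) J S := by
  have h1 := (hP.sebo _ _ rfl hK hr (J := J)
    ⟨hmin.1, by linear_combination -add_self_fun (pt r)⟩ (by simp [distF_self hJ hmin])).2
    S x y hx hy (by rw [hxi]) (by rw [hyi]) hS
  rw [Potential.sum_symmDiff_gain] at h1
  omega

/-- A vertex `x` of `K` at the level of `K` is joined to the root of `K` inside `K` by an edge set
of nonpositive weight: a shortest path from `r` to `x` enters `K` along the beam only, and this is
the part of it inside `K`. -/
lemma exists_root_set (hJ : ∀ e, e ∈ J ↔ e ∈ F) (hmin : IsLeastBd G J)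
    (hP : Potential G R (bd J + pt r) f (fun _ => 1) fun x => distF G F r x + J.card)
    (hK : IsComp G (R.filter fun x => distF G F r x + (J.card : ℤ) ≤ i + J.card) K)
    (hR : ∀ x, x ∈ R ↔ G.Reachable r x) (hrK : r ∉ K) {b s : V} (hbs : s(b, s) ∈ J)
    (hb : b ∈ K) (hs : s ∉ K) {x : V} (hx : x ∈ K) (hxi : distF G F r x = i) :
    ∃ S, IsBd G (pt x + pt b) S ∧ (∀ e ∈ S, ∀ v ∈ e, v ∈ K) ∧
      Potential.gain (fun _ => 1) J S ≤ 0 := by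
  classical
  have hxR := (Finset.mem_filter.1 (hK.2.1 hx)).1
  have hbi := distF_eq_of_adj hP hK hb hs (hmin.1 _ hbs)
  obtain ⟨p, hp, hpd⟩ := exists_path_eq_distF hJ ((hR x).1 hxR)
  have hbd := bd_walk p hp.isTrail
  have hw := walkWt_eq_gain hJ p hp.isTrail
  rw [hpd, hxi] at hw
  have hcut := cross_beam hJ hmin hP hK ((hR r).2 .rfl) hrK hbs hb hs
  generalize p.edges.toFinset = P at hbd hw
  -- After exchange along `P` the join leaves `K` no more, so `P` crosses where the join does.
  have h1 := (hP.sebo _ _ rfl hK hxR (J := symmDiff J P)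
    (((show IsBd G (bd J) J from ⟨hmin.1, rfl⟩).symmDiff hbd).cast (add_assoc _ _ _).symm)
    (by rw [Potential.sum_symmDiff_gain, ← hw, hxi]; simp [add_comm])).1
  rw [if_pos hx, Finset.card_eq_zero] at h1
  have hcr : ∀ e, Crosses K e → (e ∈ P ↔ e = s(b, s)) := by
    intro e he
    have h2 : e ∉ symmDiff J P := fun h => by
      have : e ∈ cross (symmDiff J P) K := mem_cross.2 ⟨h, he⟩
      simp [h1] at this
    have h3 : e ∈ J ↔ e = s(b, s) := by
      rw [← Finset.mem_singleton, ← hcut, mem_cross]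
      exact ⟨fun h => ⟨h, he⟩, fun h => h.1⟩
    rw [Finset.mem_symmDiff] at h2
    tauto
  have hbsc : Crosses K s(b, s) := ⟨⟨b, by simp, hb⟩, s, by simp, hs⟩
  let S := P.filter fun e => ∀ v ∈ e, v ∈ K
  have hSP : S ⊆ P := Finset.filter_subset _ _
  have hin : ∀ v ∈ K, bd (P \ S) v = pt b v := by
    intro v hv
    rw [bd, Finset.sum_eq_single s(b, s)]
    · have hvs : v ≠ s := fun h => hs (h ▸ hv)
      by_cases hvb : v = b
      · simp [hvb, pt]
      · simp [hvb, hvs, pt]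
    · intro e he hne
      rw [Finset.mem_sdiff, Finset.mem_filter] at he
      refine if_neg fun hve => hne ((hcr e ⟨⟨v, hve, hv⟩, ?_⟩).1 he.1)
      by_contra! hcon
      exact he.2 ⟨he.1, hcon⟩
    · intro he
      refine absurd (Finset.mem_sdiff.2 ⟨(hcr _ hbsc).2 rfl, fun h => ?_⟩) he
      exact hs ((Finset.mem_filter.1 h).2 s (by simp))
  have hsub := bd_sdiff hSP
  have hSb : bd S = pt x + pt b := by
    funext v
    by_cases hv : v ∈ K
    · have h2 := hin v hv
      have hvr : v ≠ r := fun h => hrK (h ▸ hv)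
      have h3 : (pt r : V → ZMod 2) v = 0 := by simp [pt, hvr]
      rw [hsub, hbd.2] at h2
      simp only [Pi.add_apply, h3, zero_add] at h2 ⊢
      rw [← h2, ← add_assoc, CharTwo.add_self_eq_zero, zero_add]
    · have hvx : v ≠ x := fun h => hv (h ▸ hx)
      have hvb : v ≠ b := fun h => hv (h ▸ hb)
      rw [bd, Finset.sum_eq_zero]
      · simp [pt, hvx, hvb]
      · intro e he
        exact if_neg fun hve => hv ((Finset.mem_filter.1 he).2 v hve)
  refine ⟨S, ⟨fun e he => hbd.1 e (hSP he), hSb⟩, fun e he => (Finset.mem_filter.1 he).2, ?_⟩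
  have h4 := distF_le_gain hJ hmin (a := r) (b := b) (S := P \ S)
    ⟨fun e he => hbd.1 e (Finset.sdiff_subset he), by
      rw [hsub, hbd.2, hSb]; linear_combination add_self_fun (pt x)⟩
  have h5 := Potential.gain_sdiff (fun _ => 1) J hSP
  omega

/-- If `b` is closer to `a` than `s` by one, then every shortest edge set from `a` to `b` uses the
edge `s(b, s)` of the join, since otherwise adding it would give a shorter way to `s`. -/
lemma beam_mem (hJ : ∀ e, e ∈ J ↔ e ∈ F) (hmin : IsLeastBd G J) {a b s : V}
    (hbs : s(b, s) ∈ J) (hcong : distF G F a b = distF G F a s - 1) {S : Finset (Sym2 V)}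
    (hS : IsBd G (pt a + pt b) S) (hle : Potential.gain (fun _ => 1) J S ≤ distF G F a b) :
    s(b, s) ∈ S := by
  by_contra hcon
  have hadj : G.Adj b s := hmin.1 _ hbs
  have h1 := distF_le_gain hJ hmin (a := a) (b := s) (S := {s(b, s)} ∪ S)
    ⟨fun e he => by
      rcases Finset.mem_union.1 he with h | h
      · exact (IsBd.edge hadj).1 e h
      · exact hS.1 e h, by
      rw [bd_union (by simpa using hcon), bd_single hadj.ne, hS.2]
      linear_combination add_self_fun (pt b)⟩
  rw [Potential.gain, Finset.sum_union (by simpa using hcon)] at h1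
  simp only [Finset.sum_singleton, hbs, if_true] at h1
  rw [Potential.gain] at hle
  omega

end Beam

end Potential

/-- With `K` a decapital distance component w.r.t. `r`, `F`-beam
`s(rK, sK)`, and `r' ∉ K` `K`-congruent to `r`, every `F`-shortest path between
`r'` and `rK` contains the beam and meets `K` only in `rK`. -/
theorem stmt_2 {V : Type*} [Fintype V] [DecidableEq V]
    (G : SimpleGraph V) (T : Set V) (hbip : G.Colorable 2) (hgraft : IsGraft G T)
    (F : Set (Sym2 V)) (hF : IsMinJoin G T F)
    (r : V) (K : Set V) (hK : IsDecapDistComp G F r K)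
    (rK sK : V) (hadj : G.Adj rK sK) (hbeam : s(rK, sK) ∈ F)
    (hrK : rK ∈ K) (hsK : sK ∉ K)
    (r' : V) (hr' : r' ∉ K)
    (hcong : distF G F r' rK = distF G F r' sK - 1) :
    ∀ P : G.Walk r' rK, P.IsPath → walkWt F P = distF G F r' rK →
      s(rK, sK) ∈ P.edges ∧ {v | v ∈ P.support} ∩ K = {rK} := by
  classical
  have hJ : ∀ e, e ∈ F.toFinite.toFinset ↔ e ∈ F := fun e => by simp
  generalize F.toFinite.toFinset = J at hJ
  have hmin := isLeast_of_isMinJoin hF hJ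
  obtain ⟨i, ⟨-, hKc⟩, hr⟩ := hK
  have hKf : ∀ v, v ∈ K.toFinset ↔ v ∈ K := fun v => by simp
  generalize K.toFinset = Kf at hKf
  have hRf : ∀ x, x ∈ Finset.univ.filter (G.Reachable r) ↔ G.Reachable r x := fun x => by simp
  generalize Finset.univ.filter (G.Reachable r) = R at hRf
  obtain ⟨f, hP⟩ := potential_distF hJ hmin hbip r R hRf
  have hb := (hKf rK).2 hrK
  have hs := mt (hKf sK).1 hsK
  have hrf := mt (hKf r).1 hr
  -- If `rK` were unreachable from `r`, then so would be `sK`, and both would have the junk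
  -- distance `0`, so that `sK` would lie in the same component `K`.
  have hbR : rK ∈ R := by
    by_contra hcon
    rw [hRf] at hcon
    have h1 : distF G F r rK ≤ i := hKc.2.1 hrK
    have h2 : ¬ G.Reachable r sK := fun h => hcon (h.trans hadj.symm.reachable)
    rw [distF_eq_zero_of_not_reachable hcon, ← distF_eq_zero_of_not_reachable (F := F) h2] at h1
    exact hsK (hKc.2.2.2 rK hrK sK h1 hadj)
  have hK := isComp_of_isComponentOf hKf hRf hKc hb hbR J.card
  have hbs := (hJ _).2 hbeam
  have hbi := distF_eq_of_adj hP hK hb hs hadj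
  intro P hPp hPw
  have hPb := bd_walk P hPp.isTrail
  have hPg := walkWt_eq_gain hJ P hPp.isTrail
  rw [hPw] at hPg
  refine ⟨List.mem_toFinset.1 (beam_mem hJ hmin hbs hcong hPb hPg.ge), ?_⟩
  ext z
  simp only [Set.mem_inter_iff, Set.mem_ofPred_eq, Set.mem_singleton_iff]
  refine ⟨fun ⟨hz, hzK⟩ => ?_, fun h => by rw [h]; exact ⟨P.end_mem_support, hrK⟩⟩
  obtain ⟨x, u, q, hux, p₂, rfl, hxK, hq⟩ := exists_first_entry K P hr' hz hzK
  have huK := hq u q.end_mem_support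
  have hx := (hKf x).2 hxK
  have hcons := hPp.of_append_right
  have hp₂ := ((SimpleGraph.Walk.cons_isPath_iff hux p₂).1 hcons).1
  by_cases hxb : x = rK
  · subst hxb
    have : p₂ = .nil := SimpleGraph.Walk.isPath_iff_nil.1 hp₂ |>.eq_nil
    subst this
    rw [SimpleGraph.Walk.mem_support_append_iff] at hz
    rcases hz with h | h
    · exact absurd hzK (hq z h)
    · simp only [SimpleGraph.Walk.support_cons, SimpleGraph.Walk.support_nil, List.mem_cons,
        List.not_mem_nil, or_false] at h
      rcases h with rfl | h
      · exact absurd hzK huK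
      · exact h
  · exfalso
    -- If `P` entered `K` at `x` other than the root, then replacing the rest of `P` by an edge
    -- set inside `K` would give a shortest edge set avoiding the beam.
    have hxi := distF_eq_of_adj hP hK hx (mt (hKf u).1 huK) hux.symm
    have hQ := bd_walk p₂ hp₂.isTrail
    have hQg := gain_pair_nonneg hJ hmin hP hK ((hRf r).2 .rfl) hx hb hxi hbi hQ
    obtain ⟨S, hSb, hSK, hSg⟩ := exists_root_set hJ hmin hP hK hRf hrf hbs hb hs hx hxi
    set Pe := (q.append (SimpleGraph.Walk.cons hux p₂)).edges.toFinset with hPe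
    have hsub : p₂.edges.toFinset ⊆ Pe := by
      intro e he
      rw [List.mem_toFinset] at he
      simp [hPe, he]
    have hrest : ∀ e ∈ Pe \ p₂.edges.toFinset, e ∈ q.edges ∨ e = s(u, x) := by
      intro e he
      simp only [hPe, Finset.mem_sdiff, List.mem_toFinset, SimpleGraph.Walk.edges_append,
        SimpleGraph.Walk.edges_cons, List.mem_append, List.mem_cons] at he
      tauto
    have hqK : ∀ e ∈ q.edges, ∀ v ∈ e, v ∉ K := fun e he v hv =>
      hq v (SimpleGraph.Walk.mem_support_of_mem_edges he hv)
    have hdisj : Disjoint (Pe \ p₂.edges.toFinset) S := by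
      rw [Finset.disjoint_left]
      intro e he heS
      have hin : ∀ v ∈ e, v ∈ K := fun v hv => (hKf v).1 (hSK e heS v hv)
      rcases hrest e he with h | rfl
      · induction e with | _ a b => exact hqK _ h a (by simp) (hin a (by simp))
      · exact huK (hin u (by simp))
    have h1 := Potential.gain_sdiff (fun _ => 1) J hsub
    have h2 : Potential.gain (fun _ => 1) J (Pe \ p₂.edges.toFinset ∪ S) =
        Potential.gain (fun _ => 1) J (Pe \ p₂.edges.toFinset) +
          Potential.gain (fun _ => 1) J S := Finset.sum_union hdisj
    have h3 := beam_mem hJ hmin hbs hcong (S := Pe \ p₂.edges.toFinset ∪ S)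
      ⟨fun e he => by
        rcases Finset.mem_union.1 he with h | h
        · exact hPb.1 e (Finset.sdiff_subset h)
        · exact hSb.1 e h, by
        rw [bd_union hdisj, bd_sdiff hsub, hPb.2, hQ.2, hSb.2]
        linear_combination add_self_fun (pt rK) + add_self_fun (pt x)⟩ (by omega)
    rcases Finset.mem_union.1 h3 with h | h
    · rcases hrest _ h with h | h
      · exact hqK _ h rK (by simp) hrK
      · have : rK ∈ s(u, x) := h ▸ (by simp)
        rcases Sym2.mem_iff.1 this with h | h
        · exact huK (h ▸ hrK)
        · exact hxb h.symm
    · exact hs (hSK _ h sK (by simp))
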